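/- arXiv:1506.04036 — 2 statements merged into one kernel-verified Lean document; each statement's English description precedes it below -/
import Mathlib

section
/- Let k ≤ n be a nonnegative integer. (i) If mk < n, then every F_{q^m}-linear code C ⊆ F_{q^m}^n of dimension k satisfies C* ≠ F_{q^m}^n (that is, C is rank degenerate). (ii) If mk ≥ n, then there exists an F_{q^m}-linear code C ⊆ F_{q^m}^n of dimension k with C* = F_{q^m}^n. -/
open Submodule Module

namespace RankPaper

variable {n : ℕ}

/-- The coordinatewise `q^i`-th power map on `Fqm^n`. -/
def qpowMap (q i : ℕ) {Fqm : Type} [Field Fqm] (v : Fin n → Fqm) : Fin n → Fqm :=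
  fun j => v j ^ q ^ i

/-- The Galois closure `D* = Σ_{i=0}^{m-1} D^{q^i}` of a subspace (as the span of the
union of the images of `D` under the coordinatewise `q^i`-power maps, `0 ≤ i < m`). -/
def galClosure (q m : ℕ) {Fqm : Type} [Field Fqm] (D : Submodule Fqm (Fin n → Fqm)) :
    Submodule Fqm (Fin n → Fqm) :=
  Submodule.span Fqm (⋃ i ∈ Finset.range m, qpowMap q i '' (D : Set (Fin n → Fqm)))

/-- `D` is Galois closed if `D = D*`. -/
def GaloisClosed (q m : ℕ) {Fqm : Type} [Field Fqm] (D : Submodule Fqm (Fin n → Fqm)) : Prop :=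
  galClosure q m D = D

/-- Rank weight of a subspace: `wt_R(D) = dim_{Fqm} D*`. -/
noncomputable def wtR (q m : ℕ) {Fqm : Type} [Field Fqm]
    (D : Submodule Fqm (Fin n → Fqm)) : ℕ :=
  finrank Fqm (galClosure q m D)

/-- Rank weight of a vector: `wt_R(c) = wt_R(span {c})`. -/
noncomputable def wtRv (q m : ℕ) {Fqm : Type} [Field Fqm] (c : Fin n → Fqm) : ℕ :=
  wtR q m (Submodule.span Fqm ({c} : Set (Fin n → Fqm)))

/-- Hamming weight of a subspace: the number of coordinates where some element is nonzero. -/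
noncomputable def wtH {Fqm : Type} [Field Fqm] (D : Submodule Fqm (Fin n → Fqm)) : ℕ :=
  {i : Fin n | ∃ d ∈ D, d i ≠ 0}.ncard

/-- `r`-th generalized rank weight of a linear code. -/
noncomputable def dR (q m : ℕ) {Fqm : Type} [Field Fqm]
    (C : Submodule Fqm (Fin n → Fqm)) (r : ℕ) : ℕ :=
  sInf { dv | ∃ V : Submodule Fqm (Fin n → Fqm),
    GaloisClosed q m V ∧ r ≤ finrank Fqm ↥(C ⊓ V) ∧ dv = finrank Fqm ↥V }

/-- `r`-th generalized Hamming weight of a linear code. -/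
noncomputable def dH {Fqm : Type} [Field Fqm]
    (C : Submodule Fqm (Fin n → Fqm)) (r : ℕ) : ℕ :=
  sInf { w | ∃ D : Submodule Fqm (Fin n → Fqm), D ≤ C ∧ finrank Fqm ↥D = r ∧ w = wtH D }

/-- `r`-th relative generalized rank weight of a nested code pair. -/
noncomputable def MR (q m : ℕ) {Fqm : Type} [Field Fqm]
    (C₁ C₂ : Submodule Fqm (Fin n → Fqm)) (r : ℕ) : ℕ :=
  sInf { dv | ∃ V : Submodule Fqm (Fin n → Fqm), GaloisClosed q m V ∧
    r ≤ finrank Fqm ↥(C₁ ⊓ V) - finrank Fqm ↥(C₂ ⊓ V) ∧ dv = finrank Fqm ↥V }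

/-- Minimum rank distance of an arbitrary (possibly nonlinear) code. -/
noncomputable def dRset (q m : ℕ) {Fqm : Type} [Field Fqm] (C : Set (Fin n → Fqm)) : ℕ :=
  sInf { w | ∃ c₁ ∈ C, ∃ c₂ ∈ C, c₁ ≠ c₂ ∧ w = wtRv q m (c₁ - c₂) }

/-- The linear functional `x ↦ Σ_j x_j y_j` (dot product with `y`). -/
def dotLin {K : Type} [Field K] (y : Fin n → K) : (Fin n → K) →ₗ[K] K :=
  ∑ j, y j • LinearMap.proj j

/-- Orthogonal complement of a subspace with respect to the standard bilinear form. -/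
def perp {K : Type} [Field K] (L : Submodule K (Fin n → K)) : Submodule K (Fin n → K) :=
  ⨅ y ∈ L, LinearMap.ker (dotLin y)

/-- The coordinatewise inclusion `Fq^n → Fqm^n`. -/
def embFq (Fq Fqm : Type) [Field Fq] [Field Fqm] [Algebra Fq Fqm] :
    (Fin n → Fq) →ₗ[Fq] (Fin n → Fqm) :=
  LinearMap.pi fun j => (Algebra.linearMap Fq Fqm).comp (LinearMap.proj j)

/-- `V_L = L ⊗ Fqm`, the `Fqm`-span of `L ⊆ Fq^n` inside `Fqm^n`. -/
def VL {Fq : Type} (Fqm : Type) [Field Fq] [Field Fqm] [Algebra Fq Fqm]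
    (L : Submodule Fq (Fin n → Fq)) : Submodule Fqm (Fin n → Fqm) :=
  Submodule.span Fqm (embFq Fq Fqm '' (L : Set (Fin n → Fq)))

/-- Rank-punctured code `C^L`: the image of `C` in `Fqm^n / V_{L^⊥}`. -/
noncomputable def punct {Fq Fqm : Type} [Field Fq] [Field Fqm] [Algebra Fq Fqm]
    (L : Submodule Fq (Fin n → Fq)) (C : Submodule Fqm (Fin n → Fqm)) :
    Submodule Fqm ((Fin n → Fqm) ⧸ VL Fqm (perp L)) :=
  Submodule.map (VL Fqm (perp L)).mkQ C


/-- The `q^i`-power map is a ring homomorphism. -/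
lemma exists_frob (Fq Fqm : Type) [Field Fq] [Field Fqm] [Algebra Fq Fqm] [Finite Fqm] (i : ℕ) :
    ∃ f : Fqm →+* Fqm, ∀ x, f x = x ^ (Nat.card Fq) ^ i := by
  have := Finite.of_injective _ (FaithfulSMul.algebraMap_injective Fq Fqm)
  have := Fintype.ofFinite Fq
  refine ⟨((FiniteField.frobeniusAlgHom Fq Fqm ^ i : Fqm →ₐ[Fq] Fqm) : Fqm →+* Fqm), fun x => ?_⟩
  rw [RingHom.coe_coe, AlgHom.coe_pow, FiniteField.coe_frobeniusAlgHom, pow_iterate,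
    Fintype.card_eq_nat_card]

lemma part_one (q m n k : ℕ) (Fq Fqm : Type) [Field Fq] [Field Fqm] [Algebra Fq Fqm]
    [Finite Fqm] (hq : Nat.card Fq = q)
    (h : m * k < n) (C : Submodule Fqm (Fin n → Fqm)) (hC : finrank Fqm C = k) :
    galClosure q m C ≠ ⊤ := by
  intro htop
  let b := finBasisOfFinrankEq Fqm C hC
  let w : Fin m × Fin k → (Fin n → Fqm) := fun p => qpowMap q p.1 (b p.2 : Fin n → Fqm)
  have hle : galClosure q m C ≤ span Fqm (Set.range w) := by
    refine span_le.2 (Set.iUnion₂_subset fun i hi => ?_)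
    rintro _ ⟨v, hv, rfl⟩
    obtain ⟨f, hf⟩ := exists_frob Fq Fqm i
    rw [hq] at hf
    have e : qpowMap q i v =
        ∑ j, f (b.repr ⟨v, hv⟩ j) • w (⟨i, Finset.mem_range.1 hi⟩, j) := by
      have h1 : v = ∑ j, b.repr ⟨v, hv⟩ j • (b j : Fin n → Fqm) := by
        have := congrArg Subtype.val (b.sum_repr ⟨v, hv⟩)
        rw [AddSubmonoidClass.coe_finsetSum] at this
        exact this.symm
      funext c
      have h2 := congrFun h1 c
      simp only [qpowMap, w, Finset.sum_apply, Pi.smul_apply, smul_eq_mul] at h2 ⊢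
      rw [← hf, congrArg f h2, map_sum]
      refine Finset.sum_congr rfl fun j _ => ?_
      rw [map_mul, hf ((b j : Fin n → Fqm) c)]
    rw [e]
    exact sum_mem fun j _ => smul_mem _ _ (subset_span ⟨_, rfl⟩)
  rw [htop, top_le_iff] at hle
  have h3 := finrank_range_le_card (R := Fqm) w
  rw [Set.finrank, hle, finrank_top] at h3
  simp at h3
  omega

lemma part_two (q m n k : ℕ) (Fq Fqm : Type) [Field Fq] [Field Fqm] [Algebra Fq Fqm]
    [Finite Fqm] (hq : Nat.card Fq = q) (hm : finrank Fq Fqm = m) (hkn : k ≤ n)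
    (h : n ≤ m * k) : ∃ C : Submodule Fqm (Fin n → Fqm), finrank Fqm C = k ∧
      galClosure q m C = ⊤ := by
  have := Finite.of_injective _ (FaithfulSMul.algebraMap_injective Fq Fqm)
  let a := finBasisOfFinrankEq Fq Fqm hm
  have hdiv : ∀ c : Fin n, (c : ℕ) / k < m := fun c =>
    Nat.div_lt_of_lt_mul (by rw [mul_comm]; exact c.2.trans_le h)
  let l : Fin n → Fin m := fun c => ⟨c / k, hdiv c⟩
  let g : Fin k → (Fin n → Fqm) := fun j c => if (c : ℕ) % k = j then a (l c) else 0
  have hg : LinearIndependent Fqm g := by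
    rw [Fintype.linearIndependent_iff]
    intro x hx j
    have h1 := congrFun hx ⟨j, j.2.trans_le hkn⟩
    simp only [g, Finset.sum_apply, Pi.smul_apply, smul_eq_mul, Pi.zero_apply,
      Nat.mod_eq_of_lt j.2] at h1
    rw [Finset.sum_eq_single j] at h1
    · simpa [a.ne_zero] using h1
    · intro j' _ hne
      rw [if_neg (fun e => hne (Fin.ext e.symm)), mul_zero]
    · simp
  refine ⟨span Fqm (Set.range g), by simpa using finrank_span_eq_card hg, ?_⟩
  rw [eq_top_iff, ← (Pi.basisFun Fqm (Fin n)).span_eq, span_le]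
  rintro _ ⟨c, rfl⟩
  have hk : 0 < k := by
    rcases Nat.eq_zero_or_pos k with rfl | hk
    · have := c.2
      omega
    · exact hk
  let j : Fin k := ⟨c % k, Nat.mod_lt _ hk⟩
  have e : Pi.basisFun Fqm (Fin n) c =
      ∑ i ∈ Finset.range m, qpowMap q i (a.traceDual (l c) • g j) := by
    funext c'
    have ht := FiniteField.algebraMap_trace_eq_sum_pow Fq Fqm (a.traceDual (l c) * g j c')
    rw [hq, hm] at ht
    simp only [Finset.sum_apply, qpowMap, Pi.smul_apply, smul_eq_mul]
    rw [← ht, Pi.basisFun_apply, Pi.single_apply]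
    simp only [g, j]
    by_cases hc : (c' : ℕ) % k = c % k
    · rw [if_pos hc, Basis.trace_traceDual_mul]
      by_cases hcc : c' = c
      · simp [hcc]
      · rw [if_neg hcc, if_neg, map_zero]
        intro hl
        apply hcc
        have hl' : (c' : ℕ) / k = c / k := congrArg Fin.val hl
        apply Fin.ext
        rw [← Nat.div_add_mod (c' : ℕ) k, ← Nat.div_add_mod (c : ℕ) k, hl', hc]
    · rw [if_neg hc, if_neg (fun e => hc (by rw [e]))]
      simp
  rw [e]
  refine sum_mem fun i hi => subset_span ?_
  exact Set.mem_iUnion₂.2 ⟨i, hi, _, smul_mem _ _ (subset_span ⟨j, rfl⟩), rfl⟩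

/-- (i) if `mk < n` then every `k`-dimensional code `C ⊆ Fqm^n` is rank
degenerate (`C* ≠ Fqm^n`); (ii) if `mk ≥ n` then some `k`-dimensional code satisfies
`C* = Fqm^n`. -/
theorem stmt8 (q m n k : ℕ) (Fq Fqm : Type) [Field Fq] [Field Fqm] [Algebra Fq Fqm]
    [Finite Fqm] (hq : Nat.card Fq = q) (hm : finrank Fq Fqm = m) (hkn : k ≤ n) :
    (m * k < n → ∀ C : Submodule Fqm (Fin n → Fqm), finrank Fqm C = k →
      galClosure q m C ≠ ⊤) ∧
    (n ≤ m * k → ∃ C : Submodule Fqm (Fin n → Fqm), finrank Fqm C = k ∧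
      galClosure q m C = ⊤) := by
  exact ⟨fun h C hC => part_one q m n k Fq Fqm hq h C hC,
    fun h => part_two q m n k Fq Fqm hq hm hkn h⟩

end RankPaper
end

section
/- Fix integers k with 1 ≤ k ≤ n and 1 ≤ r, s ≤ k, and functions f, g : ℕ → ℝ with g nondecreasing. If f(d_{H,r}(C)) ≥ g(d_{H,s}(C)) holds for every F_{q^m}-linear code C ⊆ F_{q^m}^n of dimension k, then f(d_{R,r}(C)) ≥ g(d_{R,s}(C)) also holds for every F_{q^m}-linear code C ⊆ F_{q^m}^n of dimension k. -/
open Submodule Module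

namespace RankPaper

variable {n : ℕ}

lemma exists_sub_finrank {K : Type} [Field K] {n r : ℕ} (W : Submodule K (Fin n → K))
    (h : r ≤ finrank K W) : ∃ D : Submodule K (Fin n → K), D ≤ W ∧ finrank K D = r := by
  obtain ⟨v, hv⟩ := exists_linearIndependent_of_le_finrank h
  have hv' : LinearIndependent K (fun i => (v i : Fin n → K)) :=
    hv.map' W.subtype (Submodule.ker_subtype W)
  refine ⟨Submodule.span K (Set.range fun i => (v i : Fin n → K)), ?_, ?_⟩
  · rw [Submodule.span_le]
    rintro _ ⟨i, rfl⟩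
    exact (v i).2
  · rw [finrank_span_eq_card hv', Fintype.card_fin]

lemma exists_adapted_basis {K : Type} [Field K] {n : ℕ} (L : Submodule K (Fin n → K)) :
    ∃ (b : Basis (Fin n) K (Fin n → K)) (T : Set (Fin n)), L = Submodule.span K (b '' T) := by
  obtain ⟨s, hsL, hspan, hs⟩ := exists_linearIndependent K (L : Set (Fin n → K))
  have hs' : LinearIndepOn K id s := hs
  let b0 := Basis.extend hs'
  have hfin : Finite (hs'.extend (Set.subset_univ s)) := Module.Finite.finite_basis b0
  have hcard : Nat.card (hs'.extend (Set.subset_univ s)) = n := by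
    rw [← Module.finrank_eq_nat_card_basis b0]; simp
  let e : hs'.extend (Set.subset_univ s) ≃ Fin n := Finite.equivFinOfCardEq hcard
  refine ⟨b0.reindex e, {i | ((e.symm i : _) : Fin n → K) ∈ s}, ?_⟩
  have : (b0.reindex e) '' {i | ((e.symm i : _) : Fin n → K) ∈ s} = s := by
    ext x
    constructor
    · rintro ⟨i, hi, rfl⟩
      simpa [b0] using hi
    · intro hx
      refine ⟨e ⟨x, hs'.subset_extend _ hx⟩, ?_, ?_⟩
      · simpa using hx
      · simp [b0]
  rw [this, hspan, Submodule.span_eq]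

lemma exists_ext_basis {Fq Fqm : Type} [Field Fq] [Field Fqm] [Algebra Fq Fqm] {n : ℕ}
    (b : Basis (Fin n) Fq (Fin n → Fq)) :
    ∃ B : Basis (Fin n) Fqm (Fin n → Fqm), ∀ i, B i = embFq Fq Fqm (b i) := by
  have hspan : ⊤ ≤ Submodule.span Fqm (Set.range fun i => embFq Fq Fqm (b i)) := by
    have h1 : ∀ w : Fin n → Fq,
        embFq Fq Fqm w ∈ Submodule.span Fqm (Set.range fun i => embFq Fq Fqm (b i)) := by
      intro w
      rw [← b.sum_repr w, map_sum]
      refine Submodule.sum_mem _ fun i _ => ?_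
      rw [map_smul, ← algebraMap_smul Fqm]
      exact Submodule.smul_mem _ _ (Submodule.subset_span ⟨i, rfl⟩)
    intro v _
    have hv : v = ∑ i, v i • embFq Fq Fqm (Pi.single i 1) := by
      ext j
      simp [embFq, Finset.sum_apply, Pi.single_apply]
    rw [hv]
    exact Submodule.sum_mem _ fun i _ => Submodule.smul_mem _ _ (h1 _)
  exact ⟨basisOfTopLeSpanOfCardEqFinrank _ hspan (by simp), fun i => by simp⟩

lemma qpow_mem {Fq Fqm : Type} [Field Fq] [Field Fqm] [Algebra Fq Fqm] [Finite Fqm] {n : ℕ}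
    (A : Set (Fin n → Fq)) (i : ℕ) (v : Fin n → Fqm)
    (hv : v ∈ Submodule.span Fqm (embFq Fq Fqm '' A)) :
    qpowMap (Nat.card Fq) i v ∈ Submodule.span Fqm (embFq Fq Fqm '' A) := by
  have := Finite.of_injective _ (FaithfulSMul.algebraMap_injective Fq Fqm)
  have := Fintype.ofFinite Fq
  let φ := (FiniteField.frobeniusAlgHom Fq Fqm) ^ i
  have hφ : ∀ x, φ x = x ^ (Nat.card Fq) ^ i := by
    intro x
    simp only [φ, AlgHom.coe_pow, FiniteField.coe_frobeniusAlgHom, pow_iterate,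
      Nat.card_eq_fintype_card]
  have hq : ∀ w : Fin n → Fqm, qpowMap (Nat.card Fq) i w = fun j => φ (w j) := by
    intro w; ext j; simp [qpowMap, hφ]
  rw [hq]
  induction hv using Submodule.span_induction with
  | mem x hx =>
    obtain ⟨w, hw, rfl⟩ := hx
    have : (fun j => φ (embFq Fq Fqm w j)) = embFq Fq Fqm w := by
      ext j
      simp [embFq]
    rw [this]
    exact Submodule.subset_span ⟨w, hw, rfl⟩
  | zero =>
    have : (fun j => φ ((0 : Fin n → Fqm) j)) = 0 := by
      ext j; simp
    rw [this]
    exact Submodule.zero_mem _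
  | add x y _ _ hx hy =>
    have : (fun j => φ ((x + y) j)) = (fun j => φ (x j)) + fun j => φ (y j) := by
      ext j; simp
    rw [this]
    exact Submodule.add_mem _ hx hy
  | smul a x _ hx =>
    have : (fun j => φ ((a • x) j)) = φ a • fun j => φ (x j) := by
      ext j; simp
    rw [this]
    exact Submodule.smul_mem _ _ hx

lemma le_galClosure (q m : ℕ) (hm : 0 < m) {Fqm : Type} [Field Fqm] {n : ℕ}
    (D : Submodule Fqm (Fin n → Fqm)) : D ≤ galClosure q m D := by
  intro v hv
  refine Submodule.subset_span ?_
  simp only [Set.mem_iUnion]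
  refine ⟨0, Finset.mem_range.2 hm, v, hv, ?_⟩
  ext j; simp [qpowMap]

lemma galoisClosed_span {Fq Fqm : Type} [Field Fq] [Field Fqm] [Algebra Fq Fqm] [Finite Fqm]
    {n : ℕ} (A : Set (Fin n → Fq)) :
    GaloisClosed (Nat.card Fq) (finrank Fq Fqm) (Submodule.span Fqm (embFq Fq Fqm '' A)) := by
  refine le_antisymm ?_ (le_galClosure _ _ Module.finrank_pos _)
  refine Submodule.span_le.2 ?_
  intro v hv
  simp only [Set.mem_iUnion] at hv
  obtain ⟨i, -, w, hw, rfl⟩ := hv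
  exact qpow_mem A i w hw

lemma descent {Fq Fqm : Type} [Field Fq] [Field Fqm] [Algebra Fq Fqm] [Finite Fqm]
    {n : ℕ} (V : Submodule Fqm (Fin n → Fqm))
    (hV : GaloisClosed (Nat.card Fq) (finrank Fq Fqm) V) :
    ∃ L : Submodule Fq (Fin n → Fq), V = Submodule.span Fqm (embFq Fq Fqm '' (L : Set _)) := by
  have := Finite.of_injective _ (FaithfulSMul.algebraMap_injective Fq Fqm)
  refine ⟨(V.restrictScalars Fq).comap (embFq Fq Fqm), le_antisymm ?_ ?_⟩
  · intro v hv
    let b := Module.finBasis Fq Fqm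
    let t : Fin (finrank Fq Fqm) → Fin n → Fq := fun i j => Algebra.trace Fq Fqm (v j * b i)
    have hvt : v = ∑ i, b.traceDual i • embFq Fq Fqm (t i) := by
      ext j
      conv_lhs => rw [← b.traceDual.sum_repr (v j)]
      simp [Finset.sum_apply, embFq, t, Algebra.smul_def, mul_comm, Algebra.traceForm_apply]
    have ht : ∀ i, embFq Fq Fqm (t i) ∈ V := by
      intro i
      have : embFq Fq Fqm (t i) = ∑ l ∈ Finset.range (finrank Fq Fqm),
          qpowMap (Nat.card Fq) l (b i • v) := by
        ext j
        simp only [embFq, t, LinearMap.pi_apply, LinearMap.comp_apply, LinearMap.proj_apply,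
          Algebra.linearMap_apply, FiniteField.algebraMap_trace_eq_sum_pow, Finset.sum_apply,
          qpowMap, Pi.smul_apply, smul_eq_mul]
        simp only [mul_comm]
      rw [this]
      refine Submodule.sum_mem _ fun l hl => ?_
      have hV' : galClosure (Nat.card Fq) (finrank Fq Fqm) V = V := hV
      rw [← hV']
      refine Submodule.subset_span ?_
      simp only [Set.mem_iUnion]
      exact ⟨l, hl, _, V.smul_mem _ hv, rfl⟩
    rw [hvt]
    exact Submodule.sum_mem _ fun i _ => Submodule.smul_mem _ _
      (Submodule.subset_span ⟨t i, ht i, rfl⟩)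
  · refine Submodule.span_le.2 ?_
    rintro _ ⟨w, hw, rfl⟩
    exact hw

lemma finrank_span_basis_image {K : Type} [Field K] {n : ℕ} (B : Basis (Fin n) K (Fin n → K))
    (T : Set (Fin n)) : finrank K (Submodule.span K (B '' T)) = T.ncard := by
  classical
  have h : LinearIndependent K (fun i : T => B i) :=
    B.linearIndependent.comp _ Subtype.val_injective
  have : B '' T = Set.range (fun i : T => B i) := by
    ext; simp
  rw [this, finrank_span_eq_card h, ← Nat.card_eq_fintype_card]
  rfl

lemma mem_span_basis_image {K : Type} [Field K] {n : ℕ} (B : Basis (Fin n) K (Fin n → K))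
    (T : Set (Fin n)) (v : Fin n → K) :
    v ∈ Submodule.span K (B '' T) ↔ ∀ i, B.equivFun v i ≠ 0 → i ∈ T := by
  rw [Basis.mem_span_image]
  simp [Set.subset_def]

lemma transfer {Fq Fqm : Type} [Field Fq] [Field Fqm] [Algebra Fq Fqm] [Finite Fqm]
    {n k r : ℕ} (hrk : r ≤ k) (C : Submodule Fqm (Fin n → Fqm)) (hC : finrank Fqm C = k) :
    ∃ C' : Submodule Fqm (Fin n → Fqm), finrank Fqm C' = k ∧
      (∀ s ≤ k, dR (Nat.card Fq) (finrank Fq Fqm) C s ≤ dH C' s) ∧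
      dH C' r ≤ dR (Nat.card Fq) (finrank Fq Fqm) C r := by
  have hne : { dv | ∃ V : Submodule Fqm (Fin n → Fqm),
      GaloisClosed (Nat.card Fq) (finrank Fq Fqm) V ∧
      r ≤ finrank Fqm ↥(C ⊓ V) ∧ dv = finrank Fqm ↥V }.Nonempty :=
    ⟨_, ⊤, top_le_iff.1 (le_galClosure _ _ Module.finrank_pos _), by rw [inf_top_eq, hC]; exact hrk, rfl⟩
  obtain ⟨V, hV, hVr, hVd⟩ := Nat.sInf_mem hne
  obtain ⟨L, hL⟩ := descent V hV
  obtain ⟨b, T, hb⟩ := exists_adapted_basis L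
  obtain ⟨B, hB⟩ := exists_ext_basis (Fqm := Fqm) b
  have himg : ∀ S : Set (Fin n), B '' S = embFq Fq Fqm '' (b '' S) := by
    intro S
    rw [Set.image_image]
    exact Set.image_congr fun i _ => hB i
  have hVT : V = Submodule.span Fqm (B '' T) := by
    rw [hL, himg]
    refine le_antisymm (Submodule.span_le.2 ?_) (Submodule.span_mono (Set.image_mono ?_))
    · rintro _ ⟨w, hw, rfl⟩
      have hw' : w ∈ Submodule.span Fq (b '' T) := hb ▸ hw
      have h2 := Submodule.mem_map_of_mem (f := embFq Fq Fqm) hw'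
      rw [Submodule.map_span] at h2
      exact Submodule.span_le_restrictScalars Fq Fqm _ h2
    · rw [hb]; exact Submodule.subset_span
  refine ⟨C.map (B.equivFun : (Fin n → Fqm) →ₗ[Fqm] (Fin n → Fqm)), ?_, ?_, ?_⟩
  · rw [LinearEquiv.finrank_map_eq, hC]
  · intro s hs
    have hne2 : { w | ∃ D : Submodule Fqm (Fin n → Fqm),
        D ≤ C.map (B.equivFun : (Fin n → Fqm) →ₗ[Fqm] (Fin n → Fqm)) ∧
        finrank Fqm ↥D = s ∧ w = wtH D }.Nonempty := by
      obtain ⟨D, hD, hDs⟩ := exists_sub_finrank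
        (C.map (B.equivFun : (Fin n → Fqm) →ₗ[Fqm] (Fin n → Fqm))) (r := s)
        (by rw [LinearEquiv.finrank_map_eq, hC]; exact hs)
      exact ⟨_, D, hD, hDs, rfl⟩
    obtain ⟨D, hD, hDs, hDw⟩ := Nat.sInf_mem hne2
    unfold dH
    rw [hDw]
    refine Nat.sInf_le ⟨Submodule.span Fqm (B '' {i | ∃ d ∈ D, d i ≠ 0}), ?_, ?_, ?_⟩
    · rw [himg]
      exact galoisClosed_span _
    · rw [← hDs, ← LinearEquiv.finrank_map_eq B.equivFun (C ⊓ _)]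
      refine Submodule.finrank_mono ?_
      intro d hd
      obtain ⟨c, hc, rfl⟩ := hD hd
      refine ⟨c, ⟨hc, ?_⟩, rfl⟩
      refine (mem_span_basis_image _ _ _).2 fun i hi => ⟨_, hd, hi⟩
    · rw [finrank_span_basis_image]; rfl
  · unfold dR
    rw [hVd]
    obtain ⟨D, hD, hDr⟩ := exists_sub_finrank _ hVr
    refine le_trans (Nat.sInf_le
      ⟨D.map (B.equivFun : (Fin n → Fqm) →ₗ[Fqm] (Fin n → Fqm)), ?_, ?_, rfl⟩) ?_
    · exact Submodule.map_mono (hD.trans inf_le_left)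
    · rw [LinearEquiv.finrank_map_eq, hDr]
    · rw [hVT, finrank_span_basis_image]
      refine Set.ncard_le_ncard ?_ (Set.toFinite _)
      rintro i ⟨_, ⟨d, hd, rfl⟩, hi⟩
      have : d ∈ Submodule.span Fqm (B '' T) := hVT ▸ (hD hd).2
      exact (mem_span_basis_image _ _ _).1 this i hi

/-- every bound `f(d_{H,r}(C)) ≥ g(d_{H,s}(C))` (with `g` nondecreasing)
valid for all `k`-dimensional codes transfers to generalized rank weights. -/
theorem stmt9 (q m n k r s : ℕ) (Fq Fqm : Type) [Field Fq] [Field Fqm] [Algebra Fq Fqm]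
    [Finite Fqm] (hq : Nat.card Fq = q) (hm : finrank Fq Fqm = m)
    (hk1 : 1 ≤ k) (hkn : k ≤ n) (hr1 : 1 ≤ r) (hrk : r ≤ k) (hs1 : 1 ≤ s) (hsk : s ≤ k)
    (f g : ℕ → ℝ) (hg : Monotone g)
    (hH : ∀ C : Submodule Fqm (Fin n → Fqm), finrank Fqm C = k →
      g (dH C s) ≤ f (dH C r)) :
    ∀ C : Submodule Fqm (Fin n → Fqm), finrank Fqm C = k →
      g (dR q m C s) ≤ f (dR q m C r) := by
  subst hq hm
  intro C hC
  obtain ⟨C', hC', h1, h2⟩ := transfer (Fq := Fq) hrk C hC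
  have h3 := h1 r hrk
  rw [le_antisymm h3 h2]
  exact (hg (h1 s hsk)).trans (hH C' hC')

end RankPaper
end
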